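/- Let H be a well-formed complete history and let lt assign to each event of H a key (logical time, process identifier) ∈ ℕ × ℕ, where the process identifier component equals the process at which the event occurs, such that distinct events receive distinct keys and, within each process subhistory H|p, the logical-time components are strictly increasing along the subhistory. Let H^lt be the sequence consisting of the same events as H, sorted in increasing lexicographic order of their keys. Then H is sequentially consistent if and only if H^lt is sequentially consistent. -/

import Mathlib

/-- An event of a read/write register operation execution: it is either the
invocation (`isInv = true`) or the response (`isInv = false`) of an operation,
identified by an operation identifier `op`, occurring at process `proc`,
targeting register `reg`.  `isRead` tells whether the operation is a read or a
write, and `value` is the value written (for a write) resp. returned (for a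
read). -/
structure Event where
  op : ℕ
  proc : ℕ
  reg : ℕ
  isRead : Bool
  value : ℤ
  isInv : Bool
deriving DecidableEq

/-- A history is a finite sequence of events. -/
abbrev Hist := List Event

/-- `H|p`: the process subhistory of `H`, i.e. the subsequence of events
occurring at process `p`. -/
def procSub (H : Hist) (p : ℕ) : Hist := H.filter (fun e => e.proc = p)

/-- `H|x`: the register subhistory of `H`, i.e. the subsequence of events of
operations targeting register `x`. -/
def regSub (H : Hist) (x : ℕ) : Hist := H.filter (fun e => e.reg = x)

/-- `e2` is the response event matching the invocation event `e1`. -/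
def Matches (e1 e2 : Event) : Prop :=
  e1.isInv = true ∧ e2.isInv = false ∧ e1.op = e2.op ∧ e1.proc = e2.proc ∧
    e1.reg = e2.reg ∧ e1.isRead = e2.isRead ∧ e1.value = e2.value

/-- A history is sequential if its first event is an invocation and every
invocation event (except possibly the last event) is immediately followed by
the matching response event. -/
inductive IsSequential : Hist → Prop
  | nil : IsSequential []
  | single (e : Event) : e.isInv = true → IsSequential [e]
  | cons (e1 e2 : Event) (rest : Hist) :
      Matches e1 e2 → IsSequential rest → IsSequential (e1 :: e2 :: rest)

/-- No two distinct events of a history are the invocation of the same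
operation, nor the response of the same operation. -/
def UniqueEvents (H : Hist) : Prop :=
  H.Pairwise (fun e1 e2 => ¬(e1.op = e2.op ∧ e1.isInv = e2.isInv))

/-- All events of one and the same operation agree on the process, register,
operation type and value. -/
def Coherent (H : Hist) : Prop :=
  ∀ e1 ∈ H, ∀ e2 ∈ H, e1.op = e2.op →
    e1.proc = e2.proc ∧ e1.reg = e2.reg ∧ e1.isRead = e2.isRead ∧ e1.value = e2.value

/-- A history is well-formed if every process subhistory is sequential
(together with the bookkeeping conditions making operations well-defined). -/
def WellFormed (H : Hist) : Prop :=
  UniqueEvents H ∧ Coherent H ∧ ∀ p : ℕ, IsSequential (procSub H p)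

/-- A history is complete if every invocation event has a matching response
event. -/
def Complete (H : Hist) : Prop :=
  ∀ e ∈ H, e.isInv = true → ∃ e' ∈ H, Matches e e'

/-- `H ≃ H'`: two histories are equivalent iff `H|p = H'|p` for every
process `p`. -/
def HEquiv (H H' : Hist) : Prop := ∀ p : ℕ, procSub H p = procSub H' p

/-- Operation `o1` precedes operation `o2` in history `H`
(`o1 <_H o2`): the response event of `o1` occurs before the invocation event
of `o2` in `H`. -/
def OpBefore (H : Hist) (o1 o2 : ℕ) : Prop :=
  ∃ i j : Fin H.length, i < j ∧
    (H.get i).op = o1 ∧ (H.get i).isInv = false ∧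
    (H.get j).op = o2 ∧ (H.get j).isInv = true

/-- A sequential history is legal if every read of a register returns the
value written by the closest preceding write to that register, or the initial
value `0` if no such write exists. -/
def Legal (S : Hist) : Prop :=
  ∀ k : Fin S.length, (S.get k).isInv = true → (S.get k).isRead = true →
    ((∃ j : Fin S.length, j < k ∧ (S.get j).isInv = true ∧ (S.get j).isRead = false ∧
        (S.get j).reg = (S.get k).reg ∧ (S.get j).value = (S.get k).value ∧
        ∀ l : Fin S.length, j < l → l < k → (S.get l).isInv = true →
          (S.get l).isRead = false → (S.get l).reg ≠ (S.get k).reg) ∨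
      ((S.get k).value = 0 ∧
        ∀ j : Fin S.length, j < k → (S.get j).isInv = true →
          (S.get j).isRead = false → (S.get j).reg ≠ (S.get k).reg))

/-- `SC H`: history `H` is sequentially consistent iff there is a legal
sequential history `S` with `S ≃ H`. -/
def SC (H : Hist) : Prop :=
  ∃ S : Hist, IsSequential S ∧ Legal S ∧ HEquiv S H

/-- `LIN H`: history `H` is linearizable iff there is a legal sequential
history `S` with `S ≃ H` such that `o1 <_H o2` implies `o1 <_S o2` for all
operations `o1, o2` of `H`. -/
def LIN (H : Hist) : Prop :=
  ∃ S : Hist, IsSequential S ∧ Legal S ∧ HEquiv S H ∧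
    ∀ o1 o2 : ℕ, OpBefore H o1 o2 → OpBefore S o1 o2

/-- The lexicographic order on keys `(logical time, process identifier)`. -/
def KeyLt (k1 k2 : ℕ × ℕ) : Prop := Prod.Lex (· < ·) (· < ·) k1 k2

/-- `IsLtHistory H lt Hlt`: `Hlt` is the logical-time history `H^lt`
corresponding to `H`, i.e. the sequence consisting of the same events as `H`,
sorted in increasing lexicographic order of their keys
`lt e = (logical time of e, process identifier of e)`. -/
def IsLtHistory (H : Hist) (lt : Event → ℕ × ℕ) (Hlt : Hist) : Prop :=
  Hlt.Perm H ∧ Hlt.Pairwise (fun e1 e2 => KeyLt (lt e1) (lt e2))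

/-!
`SC H` depends only on the process subhistories of `H`. Sorting events by logical time fixes each of
these: `H|p` is already in increasing order, and a list has only one arrangement sorted by an
antisymmetric relation.
-/

namespace HEquiv

variable {H H' H'' : Hist}

theorem symm (h : HEquiv H H') : HEquiv H' H := fun p => (h p).symm

theorem trans (h : HEquiv H H') (h' : HEquiv H' H'') : HEquiv H H'' :=
  fun p => (h p).trans (h' p)

theorem sc_iff (h : HEquiv H H') : SC H ↔ SC H' :=
  ⟨fun ⟨S, hseq, hlegal, hS⟩ => ⟨S, hseq, hlegal, hS.trans h⟩,
    fun ⟨S, hseq, hlegal, hS⟩ => ⟨S, hseq, hlegal, hS.trans h.symm⟩⟩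

theorem of_perm_of_pairwise_procSub {r : Event → Event → Prop} [Std.Antisymm r]
    (hperm : H.Perm H') (hsorted : ∀ p, (procSub H p).Pairwise r)
    (hsorted' : ∀ p, (procSub H' p).Pairwise r) : HEquiv H H' := fun p =>
  (hperm.filter _).eq_of_pairwise' (hsorted p) (hsorted' p)

end HEquiv

instance KeyLt.instAsymm : Std.Asymm KeyLt :=
  inferInstanceAs (Std.Asymm (Prod.Lex (· < ·) (· < ·)))

theorem sc_iff_sc_lt_history_general {r : Event → Event → Prop} [Std.Antisymm r] {H Hr : Hist}
    (hperm : Hr.Perm H) (hHr : Hr.Pairwise r) (hH : ∀ p, (procSub H p).Pairwise r) :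
    SC H ↔ SC Hr :=
  (HEquiv.of_perm_of_pairwise_procSub hperm.symm hH fun _ => hHr.filter _).sc_iff

/-- Let `H` be a well-formed complete history with a logical-time
key assignment `lt` (keys are pairs (logical time, process id), the second
component is the event's process, distinct events get distinct keys, and
logical times strictly increase along each process subhistory), and let
`H^lt` be the sequence of the same events sorted in increasing lexicographic
key order.  Then `H` is sequentially consistent iff `H^lt` is sequentially
consistent. -/
theorem sc_iff_sc_lt_history (H : Hist) (hwf : WellFormed H) (hcom : Complete H)
    (lt : Event → ℕ × ℕ)
    (hproc : ∀ e ∈ H, (lt e).2 = e.proc)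
    (hdist : H.Pairwise (fun e1 e2 => lt e1 ≠ lt e2))
    (hmono : ∀ p : ℕ, (procSub H p).Pairwise (fun e1 e2 => (lt e1).1 < (lt e2).1))
    (Hlt : Hist) (hlt : IsLtHistory H lt Hlt) :
    SC H ↔ SC Hlt :=
  sc_iff_sc_lt_history_general (r := Order.Preimage lt KeyLt) hlt.1 hlt.2
    fun p => (hmono p).imp (Prod.Lex.left _ _)
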